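/- arXiv:2512.03635 — 2 statements merged into one kernel-verified Lean document; each statement's English description precedes it below -/
import Mathlib

section
/- For every natural number n and every real number x, the n-th derivative of the sigmoid function at x equals the sum over k from 1 to n+1 of (-1)^(k+1) · (k-1)! · S(n+1,k) · σ(x)^k, where S(·,·) denotes the Stirling numbers of the second kind. -/
noncomputable def sigmoid (x : ℝ) : ℝ := Real.exp x / (1 + Real.exp x)

/-- Stirling numbers of the second kind, via the recurrence
`S(n+1,k+1) = (k+1)·S(n,k+1) + S(n,k)`. -/
def stirling2 : ℕ → ℕ → ℕ
  | 0, 0 => 1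
  | 0, _ + 1 => 0
  | _ + 1, 0 => 0
  | n + 1, k + 1 => (k + 1) * stirling2 n (k + 1) + stirling2 n k

/-!
If `f' = p(f)` for a polynomial `p`, then `(q ∘ f)' = (p q') ∘ f` for every polynomial `q`, so
`f⁽ⁿ⁾ = qₙ ∘ f`, where `qₙ` arises from `X` by applying `q ↦ p q'` repeatedly. The sigmoid satisfies
`σ' = σ (1 - σ)`, and for `p = X (1 - X)` and `q = ∑ aₖ Xᵏ` the `k`-th coefficient of `p q'` is
`k aₖ - (k - 1) aₖ₋₁`. If `aₖ = (-1)ᵏ⁺¹ (k - 1)! sₖ`, this equals `(-1)ᵏ⁺¹ (k - 1)! (k sₖ + sₖ₋₁)`,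
which is the recurrence of the Stirling numbers of the second kind.
-/

open Filter Polynomial
open scoped Nat Topology

section PolynomialVectorField

/-- The Lie derivative `q ↦ p q'` on polynomials along the vector field `p d/dX`. Along a solution
of `f' = p(f)` it computes the derivative of `q(f)`. -/
noncomputable def polynomialLieDerivative {R : Type*} [Semiring R] (p q : R[X]) : R[X] :=
  p * derivative q

variable {𝕜 : Type*} [NontriviallyNormedField 𝕜] {p : 𝕜[X]} {f : 𝕜 → 𝕜} {x : 𝕜}

theorem hasDerivAt_eval_of_hasDerivAt (hf : HasDerivAt f (p.eval (f x)) x) (q : 𝕜[X]) :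
    HasDerivAt (fun y ↦ q.eval (f y)) ((polynomialLieDerivative p q).eval (f x)) x := by
  rw [polynomialLieDerivative, eval_mul, mul_comm]
  exact (q.hasDerivAt (f x)).comp x hf

theorem iteratedDeriv_eventuallyEq_eval_iterate
    (hf : ∀ᶠ y in 𝓝 x, HasDerivAt f (p.eval (f y)) y) (n : ℕ) :
    iteratedDeriv n f =ᶠ[𝓝 x] fun y ↦ ((polynomialLieDerivative p)^[n] X).eval (f y) := by
  induction n with
  | zero => simp
  | succ n ih =>
    rw [iteratedDeriv_succ]
    filter_upwards [ih.deriv, hf] with y ih_deriv hfy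
    rw [ih_deriv, (hasDerivAt_eval_of_hasDerivAt hfy _).deriv, Function.iterate_succ_apply']

end PolynomialVectorField

section LogisticVectorField

variable {R : Type*} [CommRing R]

theorem coeff_zero_polynomialLieDerivative_logistic (q : R[X]) :
    (polynomialLieDerivative (X * (1 - X)) q).coeff 0 = 0 := by
  simp [polynomialLieDerivative, mul_coeff_zero]

theorem coeff_succ_polynomialLieDerivative_logistic (q : R[X]) (k : ℕ) :
    (polynomialLieDerivative (X * (1 - X)) q).coeff (k + 1) =
      (k + 1) * q.coeff (k + 1) - k * q.coeff k := by
  rw [polynomialLieDerivative, mul_assoc, coeff_X_mul, sub_mul, one_mul, coeff_sub]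
  cases k <;> simp [coeff_derivative, mul_comm]

theorem coeff_iterate_polynomialLieDerivative_logistic (n k : ℕ) :
    ((polynomialLieDerivative (X * (1 - X) : R[X]))^[n] X).coeff k =
      (-1) ^ (k + 1) * (k - 1)! * Nat.stirlingSecond (n + 1) k := by
  induction n generalizing k with
  | zero => rcases k with _ | _ | k <;> simp [Nat.stirlingSecond, coeff_X]
  | succ n ih =>
    rw [Function.iterate_succ_apply']
    rcases k with _ | _ | k
    · simp [coeff_zero_polynomialLieDerivative_logistic]
    · simp [coeff_succ_polynomialLieDerivative_logistic, ih, Nat.stirlingSecond_one_right]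
    · rw [coeff_succ_polynomialLieDerivative_logistic, ih, ih,
        Nat.stirlingSecond_succ_succ (n + 1)]
      simp only [Nat.add_sub_cancel, Nat.factorial_succ]
      push_cast
      ring

theorem iterate_polynomialLieDerivative_logistic (n : ℕ) :
    (polynomialLieDerivative (X * (1 - X) : R[X]))^[n] X =
      ∑ k ∈ Finset.Icc 1 (n + 1),
        C ((-1) ^ (k + 1) * ((k - 1)! : R) * (Nat.stirlingSecond (n + 1) k : R)) * X ^ k := by
  ext k
  rw [coeff_iterate_polynomialLieDerivative_logistic]
  simp only [finsetSum_coeff, coeff_C_mul_X_pow, Finset.sum_ite_eq, Finset.mem_Icc]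
  split_ifs with hk
  · rfl
  · have stirling_eq_zero : Nat.stirlingSecond (n + 1) k = 0 := by
      obtain rfl | hlt : k = 0 ∨ n + 1 < k := by lia
      · exact Nat.stirlingSecond_succ_zero n
      · exact Nat.stirlingSecond_eq_zero_of_lt hlt
    simp [stirling_eq_zero]

end LogisticVectorField

theorem sigmoid_eq_real_sigmoid : sigmoid = Real.sigmoid := by
  ext x
  rw [sigmoid, Real.sigmoid_def, Real.exp_neg]
  field_simp
  ring

theorem hasDerivAt_sigmoid (x : ℝ) : HasDerivAt sigmoid (sigmoid x * (1 - sigmoid x)) x :=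
  sigmoid_eq_real_sigmoid ▸ Real.hasDerivAt_sigmoid x

theorem stirling2_eq_stirlingSecond : stirling2 = Nat.stirlingSecond := by
  ext n k
  induction n generalizing k with
  | zero => cases k <;> rfl
  | succ n ih =>
    cases k with
    | zero => rfl
    | succ k => rw [stirling2, Nat.stirlingSecond_succ_succ, ih, ih]

theorem nth_derivative_sigmoid_general {𝕜 : Type*} [NontriviallyNormedField 𝕜] {f : 𝕜 → 𝕜} {x : 𝕜}
    (hf : ∀ᶠ y in 𝓝 x, HasDerivAt f (f y * (1 - f y)) y) (n : ℕ) :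
    iteratedDeriv n f x =
      ∑ k ∈ Finset.Icc 1 (n + 1),
        (-1 : 𝕜) ^ (k + 1) * ((k - 1)! : 𝕜) * (Nat.stirlingSecond (n + 1) k : 𝕜) * f x ^ k := by
  have logistic : ∀ᶠ y in 𝓝 x, HasDerivAt f ((X * (1 - X) : 𝕜[X]).eval (f y)) y := by
    simpa using hf
  rw [(iteratedDeriv_eventuallyEq_eval_iterate logistic n).eq_of_nhds,
    iterate_polynomialLieDerivative_logistic, eval_finsetSum]
  simp only [eval_C_mul, eval_pow, eval_X]

theorem nth_derivative_sigmoid (n : ℕ) (x : ℝ) :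
    iteratedDeriv n sigmoid x =
      ∑ k ∈ Finset.Icc 1 (n + 1),
        (-1 : ℝ) ^ (k + 1) * (Nat.factorial (k - 1) : ℝ) *
          (stirling2 (n + 1) k : ℝ) * (sigmoid x) ^ k := by
  rw [stirling2_eq_stirlingSecond]
  exact nth_derivative_sigmoid_general (.of_forall hasDerivAt_sigmoid) n
end

section
/- (Universal Approximation Theorem, constructive form) Let σ : ℝ → ℝ be a bounded sigmoidal function, let a < b be reals, let f be continuous on [a,b], and let ε > 0. Then there exist a positive integer N and a real w > 0 such that, with x_k = a + (k − 1)·(b − a)/N for k = 0, 1, …, N+1 (the uniform partition of [a − (b−a)/N, b]), the inequality |Σ_{k=2}^{N+1} (f(x_k) − f(x_{k−1}))·σ(w(x − x_k)) + f(a)·σ(w(x − x₀)) − f(x)| < ε holds for every x ∈ [a,b]. -/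
open Filter

/-- A function is sigmoidal if it tends to 1 at +∞ and to 0 at −∞. -/
def Sigmoidal (f : ℝ → ℝ) : Prop :=
  Tendsto f atTop (nhds 1) ∧ Tendsto f atBot (nhds 0)

/-- A function is bounded if the range of its absolute value is bounded above. -/
def BoundedFunction (f : ℝ → ℝ) : Prop :=
  BddAbove (Set.range fun x => |f x|)

/-!
For large `w` the map `t ↦ σ (w * t)` is uniformly close to the unit step away from the interval
`(-h, h)`. If `x` lies in the `m`-th cell of the partition, then in the sum every weight
`σ (w * (x - x_k))` is nearly `1` or nearly `0`, except for the at most two nodes within distance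
`h` of `x`. With exact weights `1` and `0` the sum telescopes to the value of `f` at the left end of
the cell, which is close to `f x`. The exceptional weights are merely bounded, but they multiply
increments of `f` that uniform continuity makes small. The mesh is therefore chosen first, against
the bound of `σ`; only then is `w` taken large enough for the `N` remaining errors to add up to
little.
-/

open Set Topology

section StepWeights

theorem sum_range_ite_lt_smul_sub {R E : Type*} [Semiring R] [AddCommGroup E] [Module R E]
    (y : ℕ → E) {m N : ℕ} (hmN : m ≤ N) :
    ∑ j ∈ Finset.range N, (if j < m then (1 : R) else 0) • (y (j + 1) - y j) = y m - y 0 := by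
  have hfilter : (Finset.range N).filter (· < m) = Finset.range m := by
    ext j
    simp only [Finset.mem_filter, Finset.mem_range]
    omega
  simp only [ite_smul, one_smul, zero_smul]
  rw [← Finset.sum_filter, hfilter, Finset.sum_range_sub]

variable {𝕜 E : Type*} [NormedField 𝕜] [SeminormedAddCommGroup E] [NormedSpace 𝕜 E]
  {s : ℕ → 𝕜} {m : ℕ} {M δ η : ℝ}

theorem norm_sub_ite_lt_le (hM : ∀ j, ‖s j‖ ≤ M) (hδ : 0 ≤ δ)
    (hone : ∀ j, j + 1 < m → ‖s j - 1‖ ≤ δ) (hzero : ∀ j, m < j → ‖s j‖ ≤ δ) (j : ℕ) :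
    ‖s j - if j < m then 1 else 0‖ ≤ δ + if j ∈ ({m - 1, m} : Finset ℕ) then M + 1 else 0 := by
  split_ifs with hlt htrans htrans <;>
    simp only [Finset.mem_insert, Finset.mem_singleton, not_or] at htrans
  · calc ‖s j - 1‖ ≤ ‖s j‖ + ‖(1 : 𝕜)‖ := norm_sub_le _ _
      _ ≤ δ + (M + 1) := by rw [norm_one]; linarith [hM j]
  · simpa only [add_zero] using hone j (by omega)
  · rw [sub_zero]
    linarith [hM j]
  · simpa only [sub_zero, add_zero] using hzero j (by omega)

theorem sum_norm_sub_ite_lt_le (hM : ∀ j, ‖s j‖ ≤ M) (hδ : 0 ≤ δ)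
    (hone : ∀ j, j + 1 < m → ‖s j - 1‖ ≤ δ) (hzero : ∀ j, m < j → ‖s j‖ ≤ δ) (N : ℕ) :
    ∑ j ∈ Finset.range N, ‖s j - if j < m then 1 else 0‖ ≤ N * δ + 2 * (M + 1) := by
  have hM0 : 0 ≤ M := (norm_nonneg _).trans (hM 0)
  have hcard : ((Finset.range N ∩ {m - 1, m}).card : ℝ) ≤ 2 := by
    exact_mod_cast (Finset.card_le_card Finset.inter_subset_right).trans Finset.card_le_two
  calc ∑ j ∈ Finset.range N, ‖s j - if j < m then 1 else 0‖
      ≤ ∑ j ∈ Finset.range N, (δ + if j ∈ ({m - 1, m} : Finset ℕ) then M + 1 else 0) :=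
        Finset.sum_le_sum fun j _ => norm_sub_ite_lt_le hM hδ hone hzero j
    _ = N * δ + (Finset.range N ∩ {m - 1, m}).card * (M + 1) := by
        rw [Finset.sum_add_distrib, Finset.sum_ite_mem, Finset.sum_const, Finset.sum_const,
          Finset.card_range, nsmul_eq_mul, nsmul_eq_mul]
    _ ≤ N * δ + 2 * (M + 1) := by gcongr

theorem norm_sum_smul_sub_sub_le {y : ℕ → E} {N : ℕ} (hmN : m ≤ N) (hM : ∀ j, ‖s j‖ ≤ M)
    (hδ : 0 ≤ δ) (hone : ∀ j, j + 1 < m → ‖s j - 1‖ ≤ δ) (hzero : ∀ j, m < j → ‖s j‖ ≤ δ)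
    (hη : 0 ≤ η) (hy : ∀ j < N, ‖y (j + 1) - y j‖ ≤ η) :
    ‖∑ j ∈ Finset.range N, s j • (y (j + 1) - y j) - (y m - y 0)‖ ≤
      (N * δ + 2 * (M + 1)) * η := by
  rw [← sum_range_ite_lt_smul_sub (R := 𝕜) y hmN, ← Finset.sum_sub_distrib]
  simp only [← sub_smul]
  calc ‖∑ j ∈ Finset.range N, (s j - if j < m then 1 else 0) • (y (j + 1) - y j)‖
      ≤ ∑ j ∈ Finset.range N, ‖s j - if j < m then 1 else 0‖ * η := by
        refine norm_sum_le_of_le _ fun j hj => ?_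
        rw [norm_smul]
        gcongr
        exact hy j (Finset.mem_range.mp hj)
    _ ≤ (N * δ + 2 * (M + 1)) * η := by
        rw [← Finset.sum_mul]
        gcongr
        exact sum_norm_sub_ite_lt_le hM hδ hone hzero N

end StepWeights

section Dilation

variable {K : Type*} [Field K] [LinearOrder K] [IsStrictOrderedRing K]
  {α : Type*} [UniformSpace α] {σ : K → α} {l : α} {h : K}

theorem tendsto_mul_atTop_prod_principal_Ici (hh : 0 < h) :
    Tendsto (fun p : K × K => p.1 * p.2) (atTop ×ˢ 𝓟 (Ici h)) atTop := by
  refine tendsto_atTop_mono' _ ?_ (tendsto_fst.atTop_mul_const hh)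
  filter_upwards [(eventually_ge_atTop 0).prod_mk (mem_principal_self (Ici h))] with p hp
  exact mul_le_mul_of_nonneg_left hp.2 hp.1

theorem tendstoUniformlyOn_comp_mul_Ici (hσ : Tendsto σ atTop (𝓝 l)) (hh : 0 < h) :
    TendstoUniformlyOn (fun w t => σ (w * t)) (fun _ => l) atTop (Ici h) :=
  tendsto_prod_principal_iff.mp (hσ.comp (tendsto_mul_atTop_prod_principal_Ici hh))

theorem tendstoUniformlyOn_comp_mul_Iic_neg (hσ : Tendsto σ atBot (𝓝 l)) (hh : 0 < h) :
    TendstoUniformlyOn (fun w t => σ (w * t)) (fun _ => l) atTop (Iic (-h)) := by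
  have hrefl := (tendstoUniformlyOn_comp_mul_Ici (hσ.comp tendsto_neg_atTop_atBot) hh).comp Neg.neg
  simpa [Function.comp_def] using hrefl

end Dilation

theorem Sigmoidal.eventually_abs_comp_mul_le {σ : ℝ → ℝ} (hσ : Sigmoidal σ) {h δ : ℝ}
    (hh : 0 < h) (hδ : 0 < δ) :
    ∀ᶠ w in atTop, (∀ t, h ≤ t → |σ (w * t) - 1| ≤ δ) ∧ ∀ t, t ≤ -h → |σ (w * t)| ≤ δ := by
  have hone := Metric.tendstoUniformlyOn_iff.mp (tendstoUniformlyOn_comp_mul_Ici hσ.1 hh) δ hδ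
  have hzero := Metric.tendstoUniformlyOn_iff.mp (tendstoUniformlyOn_comp_mul_Iic_neg hσ.2 hh) δ hδ
  filter_upwards [hone, hzero] with w hone hzero
  refine ⟨fun t ht => ?_, fun t ht => ?_⟩
  · simpa only [dist_comm (1 : ℝ), Real.dist_eq] using (hone t ht).le
  · simpa only [dist_zero_left, Real.norm_eq_abs] using (hzero t ht).le

theorem exists_nat_add_mul_le_and_lt {K : Type*} [Field K] [LinearOrder K] [IsStrictOrderedRing K]
    [FloorSemiring K] {a h x : K} (hh : 0 < h) (hx : a ≤ x) :
    ∃ m : ℕ, a + m * h ≤ x ∧ x < a + (m + 1) * h := by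
  refine ⟨⌊(x - a) / h⌋₊, ?_, ?_⟩
  · rw [← le_sub_iff_add_le', ← le_div_iff₀ hh]
    exact Nat.floor_le (div_nonneg (sub_nonneg.mpr hx) hh.le)
  · rw [← sub_lt_iff_lt_add', ← div_lt_iff₀ hh]
    exact Nat.lt_floor_add_one _

theorem add_natCast_mul_mem_Icc {R : Type*} [Semiring R] [PartialOrder R] [IsOrderedRing R]
    (a : R) {h : R} (hh : 0 ≤ h) {j N : ℕ} (hj : j ≤ N) :
    a + j * h ∈ Icc a (a + N * h) :=
  ⟨le_add_of_nonneg_right (by positivity), by gcongr⟩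

section SigmoidalSum

variable {E : Type*} [SeminormedAddCommGroup E] [NormedSpace ℝ E]

/-- The one-hidden-layer network with activation `σ` and inner weight `w` attached to the samples
of `f` at `a, a + h, …, a + N * h`. The nodes are indexed from `a`, so `a + j * h` is the point
`x_{j+1}` of the partition, and the constant `f a` is carried by a unit centred at
`x_0 = a - h`, one step to the left of the interval. -/
def sigmoidalSum (σ : ℝ → ℝ) (f : ℝ → E) (a h w : ℝ) (N : ℕ) (x : ℝ) : E :=
  ∑ j ∈ Finset.range N,
      σ (w * (x - (a + (j + 1 : ℕ) * h))) • (f (a + (j + 1 : ℕ) * h) - f (a + j * h)) +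
    σ (w * (x - (a - h))) • f a

theorem sigmoidalSum_eq_sum_Icc (σ : ℝ → ℝ) (f : ℝ → E) (a h w : ℝ) (N : ℕ) (x : ℝ) :
    sigmoidalSum σ f a h w N x =
      ∑ k ∈ Finset.Icc 2 (N + 1),
          σ (w * (x - (a + ((k : ℝ) - 1) * h))) •
            (f (a + ((k : ℝ) - 1) * h) - f (a + (((k : ℝ) - 1) - 1) * h)) +
        σ (w * (x - (a + ((0 : ℝ) - 1) * h))) • f a := by
  have hreindex (g : ℕ → E) :
      ∑ j ∈ Finset.range N, g (j + 2) = ∑ k ∈ Finset.Icc 2 (N + 1), g k := by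
    rw [Finset.range_eq_Ico, Finset.sum_Ico_add']
    rfl
  rw [← hreindex]
  simp only [sigmoidalSum]
  congr! 3 <;> push_cast <;> ring_nf

variable {σ : ℝ → ℝ} {f : ℝ → E} {a h w x M δ η : ℝ} {N : ℕ}

theorem norm_sum_comp_mul_smul_sub_sub_le {m : ℕ} (hh : 0 < h) (hM : ∀ t, |σ t| ≤ M)
    (hone : ∀ t, h ≤ t → |σ (w * t) - 1| ≤ δ) (hzero : ∀ t, t ≤ -h → |σ (w * t)| ≤ δ)
    (hmN : m ≤ N) (hmx : a + m * h ≤ x) (hxm : x < a + (m + 1) * h) (hη : 0 ≤ η)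
    (hf : ∀ j < N, ‖f (a + (j + 1 : ℕ) * h) - f (a + j * h)‖ ≤ η) :
    ‖∑ j ∈ Finset.range N,
        σ (w * (x - (a + (j + 1 : ℕ) * h))) • (f (a + (j + 1 : ℕ) * h) - f (a + j * h)) -
      (f (a + m * h) - f a)‖ ≤ (N * δ + 2 * (M + 1)) * η := by
  have hδ : 0 ≤ δ := (abs_nonneg _).trans (hone h le_rfl)
  have hleft (j : ℕ) (hj : j + 1 < m) : h ≤ x - (a + (j + 1 : ℕ) * h) := by
    have : ((j + 1 : ℕ) + 1 : ℝ) * h ≤ m * h := by gcongr; exact_mod_cast hj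
    linarith
  have hright (j : ℕ) (hj : m < j) : x - (a + (j + 1 : ℕ) * h) ≤ -h := by
    have : (m + 1 + 1 : ℝ) * h ≤ (j + 1 : ℕ) * h := by gcongr; exact_mod_cast Nat.succ_le_succ hj
    linarith
  simpa only [Nat.cast_zero, zero_mul, add_zero] using
    norm_sum_smul_sub_sub_le (y := fun j : ℕ => f (a + j * h)) hmN (fun _ => hM _) hδ
      (fun j hj => hone _ (hleft j hj)) (fun j hj => hzero _ (hright j hj)) hη hf

theorem norm_sigmoidalSum_sub_le (hh : 0 < h) (hM : ∀ t, |σ t| ≤ M)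
    (hone : ∀ t, h ≤ t → |σ (w * t) - 1| ≤ δ) (hzero : ∀ t, t ≤ -h → |σ (w * t)| ≤ δ)
    (hosc : ∀ u ∈ Icc a (a + N * h), ∀ v ∈ Icc a (a + N * h), dist u v ≤ h → dist (f u) (f v) ≤ η)
    (hx : x ∈ Icc a (a + N * h)) :
    ‖sigmoidalSum σ f a h w N x - f x‖ ≤ (N * δ + 2 * (M + 1)) * η + δ * ‖f a‖ + η := by
  simp only [dist_eq_norm (f _)] at hosc
  obtain ⟨m, hmx, hxm⟩ := exists_nat_add_mul_le_and_lt hh hx.1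
  have hmN : m ≤ N := by
    have : (m : ℝ) * h ≤ N * h := by linarith [hx.2]
    exact_mod_cast le_of_mul_le_mul_right this hh
  have hnode {j : ℕ} (hj : j ≤ N) : a + j * h ∈ Icc a (a + N * h) :=
    add_natCast_mul_mem_Icc a hh.le hj
  have hincr (j : ℕ) (hj : j < N) : ‖f (a + (j + 1 : ℕ) * h) - f (a + j * h)‖ ≤ η := by
    refine hosc _ (hnode hj) _ (hnode hj.le) ?_
    rw [dist_add_left, Real.dist_eq, ← sub_mul, Nat.cast_succ, add_sub_cancel_left, one_mul,
      abs_of_pos hh]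
  have hlast : ‖f (a + m * h) - f x‖ ≤ η := by
    refine hosc _ (hnode hmN) _ hx ?_
    rw [Real.dist_eq, abs_le]
    constructor <;> linarith
  have hsum := norm_sum_comp_mul_smul_sub_sub_le hh hM hone hzero hmN hmx hxm
    ((norm_nonneg _).trans hlast) hincr
  have hconst : ‖(σ (w * (x - (a - h))) - 1) • f a‖ ≤ δ * ‖f a‖ := by
    rw [norm_smul]
    gcongr
    exact hone _ (by linarith [hx.1])
  refine le_trans (le_of_eq ?_) (norm_add_le_of_le (norm_add_le_of_le hsum hconst) hlast)
  rw [sigmoidalSum, sub_smul, one_smul]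
  congr 1
  abel

theorem sigmoidal_approximation_theorem_general
    (hσ : Sigmoidal σ) (hbdd : BoundedFunction σ) {b : ℝ} (hab : a < b)
    (hf : ContinuousOn f (Icc a b)) {ε : ℝ} (hε : 0 < ε) :
    ∀ᶠ N : ℕ in atTop, ∀ᶠ w in atTop, ∀ x ∈ Icc a b,
      ‖sigmoidalSum σ f a ((b - a) / N) w N x - f x‖ < ε := by
  obtain ⟨M, hM⟩ := hbdd
  obtain ⟨η, hη, hηε⟩ := exists_pos_mul_lt (half_pos hε) (2 * (M + 1) + 1)
  obtain ⟨d, hd, hfd⟩ := Metric.uniformContinuousOn_iff_le.mp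
    (isCompact_Icc.uniformContinuousOn_of_continuous hf) η hη
  filter_upwards [eventually_gt_atTop 0,
    (tendsto_const_div_atTop_nhds_zero_nat (b - a)).eventually_le_const hd] with N hN hhd
  have hh : 0 < (b - a) / N := div_pos (sub_pos.mpr hab) (Nat.cast_pos.mpr hN)
  have hb : a + N * ((b - a) / N) = b := by field_simp; ring
  obtain ⟨δ, hδ, hδε⟩ := exists_pos_mul_lt (half_pos hε) (N * η + ‖f a‖)
  filter_upwards [hσ.eventually_abs_comp_mul_le hh hδ] with w ⟨hone, hzero⟩ x hx
  calc ‖sigmoidalSum σ f a ((b - a) / N) w N x - f x‖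
      ≤ (N * δ + 2 * (M + 1)) * η + δ * ‖f a‖ + η := by
        refine norm_sigmoidalSum_sub_le hh (fun t => hM ⟨t, rfl⟩) hone hzero ?_ (by rwa [hb])
        rw [hb]
        exact fun u hu v hv huv => hfd u hu v hv (huv.trans hhd)
    _ = (2 * (M + 1) + 1) * η + (N * η + ‖f a‖) * δ := by ring
    _ < ε := by linarith

end SigmoidalSum

theorem sigmoidal_approximation_theorem
    (σ : ℝ → ℝ) (hσ : Sigmoidal σ) (hbdd : BoundedFunction σ)
    (a b : ℝ) (hab : a < b)
    (f : ℝ → ℝ) (hf : ContinuousOn f (Set.Icc a b))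
    (ε : ℝ) (hε : 0 < ε) :
    ∃ N : ℕ, 0 < N ∧ ∃ w : ℝ, 0 < w ∧
      ∀ x ∈ Set.Icc a b,
        |(∑ k ∈ Finset.Icc 2 (N + 1),
            (f (a + ((k : ℝ) - 1) * ((b - a) / N)) -
              f (a + (((k : ℝ) - 1) - 1) * ((b - a) / N))) *
              σ (w * (x - (a + ((k : ℝ) - 1) * ((b - a) / N))))) +
          f a * σ (w * (x - (a + ((0 : ℝ) - 1) * ((b - a) / N)))) - f x| < ε := by
  have happrox := sigmoidal_approximation_theorem_general hσ hbdd hab hf hε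
  simp only [sigmoidalSum_eq_sum_Icc, smul_eq_mul, mul_comm (σ _), Real.norm_eq_abs] at happrox
  obtain ⟨N, hN, hw⟩ := ((eventually_gt_atTop 0).and happrox).exists
  exact ⟨N, hN, ((eventually_gt_atTop 0).and hw).exists⟩
end
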